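/- arXiv:1207.5240 — 2 statements merged into one kernel-verified Lean document; each statement's English description precedes it below -/
import Mathlib

section
/- Every word w of length k+1 over Z/mZ admits at least one 'successful partition': a way of splitting w into m consecutive (possibly empty) blocks, cyclically labeled so that the block labels increase by 1 from left to right starting with label σ+1 where σ is the sum of w mod m, such that the recovery algorithm (start at block 0; repeatedly remove the leftmost remaining letter v of the current block t and move to block t+v) removes all k+1 letters without ever reading from an empty block. -/
/-- The recovery algorithm: starting at block `t`, repeatedly remove the leftmost
letter `v` of the current block, output `t + v`, and move to block `t + v`.
It returns `none` if it ever attempts to read from an empty block; otherwise it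
returns the list of outputs together with the final state of the blocks. -/
def recover (m : ℕ) : ℕ → ZMod m → (ZMod m → List (ZMod m)) →
    Option (List (ZMod m) × (ZMod m → List (ZMod m)))
  | 0, _, B => some ([], B)
  | n + 1, t, B =>
    match B t with
    | [] => none
    | v :: rest =>
      (recover m n (t + v) (Function.update B t rest)).map
        (fun r => ((t + v) :: r.1, r.2))

/-- Concatenation of the blocks of `B` in cyclic label order starting at label `s`. -/
def concatFrom (m : ℕ) (s : ZMod m) (B : ZMod m → List (ZMod m)) : List (ZMod m) :=
  (List.range m).flatMap (fun j => B (s + (j : ℕ)))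

/-!
Read the steps of a walk `u` on `ℤ/mℤ` grouped by the vertex at which they are taken: this is a
family of blocks on which the recovery algorithm simply replays the walk. Concatenating the blocks
cyclically, from the vertex following the end of the walk, therefore sends `u` to a rearrangement
of `u` which admits a successful partition. This *sweep map* is injective, hence permutes the
finitely many words of a given length, and every word admits a successful partition.

For injectivity, compare two walks with the same sweep. At each vertex the initial segments of the
common word which they cut off are comparable. In a walk, arrivals balance departures up to the
endpoints, and this forces the vertices at which the second walk cuts off strictly more than the
first to be closed under the last exits of the second walk. Were there such a vertex, the end of
the walk would be another one; but there both walks cut off the whole word.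
-/

section Exits

variable {G : Type*} [DecidableEq G]

/-- `exits t u x` lists, in order, the steps which the walk with start `t` and successive steps `u`
takes from the vertex `x`. These are the blocks from which the recovery algorithm restores `u`. -/
def exits [Add G] : G → List G → G → List G
  | _, [] => fun _ => []
  | t, v :: u => Function.update (exits (t + v) u) t (v :: exits (t + v) u t)

theorem exits_cons_self [Add G] (t v : G) (u : List G) :
    exits t (v :: u) t = v :: exits (t + v) u t :=
  Function.update_self ..

theorem exits_cons_of_ne [Add G] {t x : G} (h : x ≠ t) (v : G) (u : List G) :
    exits t (v :: u) x = exits (t + v) u x :=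
  Function.update_of_ne h ..

theorem update_exits_tail [Add G] (t v : G) (u : List G) :
    Function.update (exits t (v :: u)) t (exits t (v :: u) t).tail = exits (t + v) u := by
  simp [exits]

theorem exits_injective [Add G] (t : G) : Function.Injective (exits t) := by
  intro u
  induction u generalizing t with
  | nil =>
    rintro (_ | ⟨v', u'⟩) h
    · rfl
    · simpa [exits] using congrFun h t
  | cons v u ih =>
    rintro (_ | ⟨v', u'⟩) h
    · simpa [exits] using congrFun h t
    · obtain rfl : v = v' := by simpa [exits] using congrArg List.head? (congrFun h t)
      have htail : exits (t + v) u = exits (t + v) u' := by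
        rw [← update_exits_tail, ← update_exits_tail, h]
      rw [ih (t + v) htail]

theorem sum_count_exits [Add G] [Fintype G] (t : G) (u : List G) (z : G) :
    ∑ x, (exits t u x).count z = u.count z := by
  induction u generalizing t with
  | nil => simp [exits]
  | cons v u ih =>
    have hcons (x : G) : (exits t (v :: u) x).count z =
        (exits (t + v) u x).count z + if x = t then [v].count z else 0 := by
      rcases eq_or_ne x t with rfl | hx
      · rw [exits_cons_self, if_pos rfl, ← List.count_append]
        exact (List.perm_append_comm (l₁ := [v])).count_eq z
      · rw [exits_cons_of_ne hx, if_neg hx, add_zero]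
    simp only [hcons, Finset.sum_add_distrib, ih, Finset.sum_ite_eq', Finset.mem_univ, if_true]
    rw [← List.count_append]
    exact (List.perm_append_comm (l₂ := [v])).count_eq z

/-- The sum over `z` counts the arrivals at `x`, those by a step `z` coming from `x - z`. -/
theorem length_exits_add [AddGroup G] [Fintype G] (t : G) (u : List G) (x : G) :
    (exits t u x).length + (if x = t + u.sum then 1 else 0) =
      ∑ z, (exits t u (x - z)).count z + if x = t then 1 else 0 := by
  induction u generalizing t with
  | nil => simp [exits]
  | cons v u ih =>
    have hlength : (exits t (v :: u) x).length =
        (exits (t + v) u x).length + if x = t then 1 else 0 := by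
      rcases eq_or_ne x t with rfl | hx
      · simp [exits_cons_self]
      · simp [exits_cons_of_ne hx, hx]
    have hcount (z : G) : (exits t (v :: u) (x - z)).count z =
        (exits (t + v) u (x - z)).count z + if z = v then (if x = t + v then 1 else 0) else 0 := by
      rcases eq_or_ne (x - z) t with hx | hx
      · obtain rfl : x = t + z := sub_eq_iff_eq_add.mp hx
        rw [hx, exits_cons_self, List.count_cons]
        rcases eq_or_ne z v with rfl | hz
        · simp
        · simp [hz, hz.symm]
      · rw [exits_cons_of_ne hx, ← ite_and, if_neg, add_zero]
        rintro ⟨rfl, rfl⟩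
        exact hx (add_sub_cancel_right t z)
    simp only [hlength, hcount, Finset.sum_add_distrib, Finset.sum_ite_eq', Finset.mem_univ,
      if_true, List.sum_cons, ← add_assoc]
    rw [← ih (t + v), add_right_comm]

theorem add_sum_mem_of_getLast?_exits [AddMonoid G] {J : Set G} {t : G} {u : List G}
    (hJ : ∀ x ∈ J, ∀ v ∈ (exits t u x).getLast?, x + v ∈ J)
    (h : t ∈ J ∨ ∃ x ∈ J, exits t u x ≠ []) : t + u.sum ∈ J := by
  induction u generalizing t with
  | nil => simpa [exits] using h
  | cons v u ih =>
    rw [List.sum_cons, ← add_assoc]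
    apply ih
    · intro x hx z hz
      apply hJ x hx z
      rcases eq_or_ne x t with rfl | hxt
      · simp_all [exits_cons_self, List.getLast?_cons]
      · rwa [exits_cons_of_ne hxt]
    · by_cases ht : t ∈ J
      · by_cases hr : exits (t + v) u t = []
        · exact Or.inl (hJ t ht v (by simp [exits_cons_self, hr]))
        · exact Or.inr ⟨t, ht, hr⟩
      · obtain ⟨x, hx, hne⟩ := h.resolve_left ht
        have hxt : x ≠ t := fun e => ht (e ▸ hx)
        exact Or.inr ⟨x, hx, by rwa [exits_cons_of_ne hxt] at hne⟩

end Exits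

theorem recover_exits {m : ℕ} (t : ZMod m) (u : List (ZMod m)) :
    recover m u.length t (exits t u) = some ((u.scanl (· + ·) t).tail, fun _ => []) := by
  induction u generalizing t with
  | nil => rfl
  | cons v u ih =>
    have hrest : Function.update (exits t (v :: u)) t (exits (t + v) u t) = exits (t + v) u := by
      simpa only [exits_cons_self, List.tail_cons] using update_exits_tail t v u
    have htail : (List.scanl (· + ·) t (v :: u)).tail =
        (t + v) :: (List.scanl (· + ·) (t + v) u).tail := by
      cases u <;> simp
    simp only [List.length_cons, recover, exits_cons_self, hrest, ih, htail, Option.map_some]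

theorem sum_pos_of_sum_perm_eq {ι X R : Type*} [Fintype ι] [Finite X] [AddCommMonoid R]
    [LinearOrder R] [IsOrderedCancelAddMonoid R] {f : ι → X → R} {π : ι → Equiv.Perm X}
    (hsign : ∀ x, (∀ i, 0 ≤ f i x) ∨ ∀ i, f i x ≤ 0)
    (hperm : ∀ x, ∑ i, f i ((π i).symm x) = ∑ i, f i x) {i : ι} {x : X} (hpos : 0 < f i x) :
    0 < ∑ j, f j (π i x) := by
  cases nonempty_fintype X
  -- Taking positive parts commutes with the column sums of `f`, by sign coherence, but can only
  -- increase those of the permuted array; as the total is the same, it commutes with these too.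
  have hmax (y : X) : ∑ j, max (f j y) 0 = max (∑ j, f j y) 0 := by
    rcases hsign y with h | h
    · rw [max_eq_left (Finset.sum_nonneg fun j _ => h j)]
      exact Finset.sum_congr rfl fun j _ => max_eq_left (h j)
    · rw [max_eq_right (Finset.sum_nonpos fun j _ => h j)]
      exact Finset.sum_eq_zero fun j _ => max_eq_right (h j)
  have hle (y : X) : max (∑ j, f j y) 0 ≤ ∑ j, max (f j ((π j).symm y)) 0 := by
    rw [← hperm y]
    exact max_le (Finset.sum_le_sum fun j _ => le_max_left _ _)
      (Finset.sum_nonneg fun j _ => le_max_right _ _)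
  have htotal : ∑ y, max (∑ j, f j y) 0 = ∑ y, ∑ j, max (f j ((π j).symm y)) 0 := by
    simp only [← hmax]
    rw [Finset.sum_comm, Finset.sum_comm (f := fun y j => max (f j ((π j).symm y)) 0)]
    exact Finset.sum_congr rfl fun j _ => ((π j).symm.sum_comp fun y => max (f j y) 0).symm
  have heq : max (∑ j, f j (π i x)) 0 = ∑ j, max (f j ((π j).symm (π i x))) 0 :=
    (Finset.sum_eq_sum_iff_of_le fun y _ => hle y).mp htotal _ (Finset.mem_univ _)
  have hentry : f i x ≤ max (∑ j, f j (π i x)) 0 := by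
    rw [heq]
    refine le_trans ?_ (Finset.single_le_sum (fun j _ => le_max_right _ _) (Finset.mem_univ i))
    simp
  simpa using hpos.trans_le hentry

theorem sum_count_eq_length {α : Type*} [Fintype α] [DecidableEq α] (l : List α) :
    ∑ z, l.count z = l.length := by
  simpa using Multiset.sum_count_eq_card (s := Finset.univ) (m := (l : Multiset α)) (by simp)

theorem count_lt_count_of_prefix_of_mem_getLast? {α : Type*} [DecidableEq α] {P Q : List α} {v : α}
    (hinitial : P <+: Q) (hlt : P.length < Q.length) (hv : v ∈ Q.getLast?) :
    P.count v < Q.count v := by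
  obtain ⟨Q, rfl⟩ := List.getLast?_eq_some_iff.mp hv
  rcases List.prefix_concat_iff.mp hinitial with rfl | hP
  · exact absurd hlt (lt_irrefl _)
  · rw [List.count_append, List.count_singleton_self, Nat.lt_succ_iff]
    exact hP.sublist.count_le v

section Cyclic

variable {m : ℕ} [NeZero m]

theorem zmod_val_sub_one_add_one {a : ZMod m} (ha : a ≠ 0) : (a - 1).val + 1 = a.val := by
  have hpos : 1 ≤ a.val := Nat.one_le_iff_ne_zero.mpr ((ZMod.val_ne_zero a).mpr ha)
  have hone : (1 : ZMod m).val = 1 := ZMod.val_one'' fun h => by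
    subst h
    exact ha (Subsingleton.elim _ _)
  rw [ZMod.val_sub (hone.trans_le hpos), hone, Nat.sub_add_cancel hpos]

theorem zmod_cyclic_induction {P : ZMod m → Prop} (s : ZMod m) (start : P s)
    (step : ∀ x, x ≠ s → P (x - 1) → P x) (x : ZMod m) : P x := by
  have hcast (r : ℕ) : P (s + r) := by
    induction r with
    | zero => simpa using start
    | succ r ih =>
      by_cases hr : s + ((r + 1 : ℕ) : ZMod m) = s
      · rwa [hr]
      · refine step _ hr ?_
        rwa [Nat.cast_succ, ← add_assoc, add_sub_cancel_right]
  simpa using hcast (x - s).val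

theorem eq_of_sub_pred_eq_of_sum_eq {R : Type*} [AddCommGroup R] [IsAddTorsionFree R]
    {f g : ZMod m → R}
    (hsub : ∀ x, f x - f (x - 1) = g x - g (x - 1)) (hsum : ∑ x, f x = ∑ x, g x) (x : ZMod m) :
    f x = g x := by
  have hconst (x : ZMod m) : f x - g x = f 0 - g 0 := by
    induction x using zmod_cyclic_induction (0 : ZMod m) with
    | start => rfl
    | step x _ ih => rw [← ih, sub_eq_sub_iff_sub_eq_sub, hsub]
  have htotal : m • (f 0 - g 0) = 0 := by
    rw [← sub_eq_zero, ← Finset.sum_sub_distrib] at hsum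
    simpa only [hconst, Finset.sum_const, Finset.card_univ, ZMod.card] using hsum
  have hzero : f 0 - g 0 = 0 := (nsmul_eq_zero_iff_right (NeZero.ne m)).mp htotal
  exact sub_eq_zero.mp ((hconst x).trans hzero)

end Cyclic

section ConcatUpTo

variable {m : ℕ}

/-- Concatenation of the blocks of `B` in cyclic label order from label `s` to label `x`
inclusive: the initial segment of `concatFrom m s B` cut off by the block `x`. -/
def concatUpTo (s : ZMod m) (B : ZMod m → List (ZMod m)) (x : ZMod m) : List (ZMod m) :=
  (List.range ((x - s).val + 1)).flatMap fun j => B (s + (j : ℕ))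

theorem concatUpTo_self (s : ZMod m) (B : ZMod m → List (ZMod m)) : concatUpTo s B s = B s := by
  simp [concatUpTo]

variable [NeZero m]

theorem concatUpTo_of_ne {s x : ZMod m} (h : x ≠ s) (B : ZMod m → List (ZMod m)) :
    concatUpTo s B x = concatUpTo s B (x - 1) ++ B x := by
  have hval : (x - 1 - s).val + 1 = (x - s).val := by
    rw [sub_right_comm, zmod_val_sub_one_add_one (sub_ne_zero.mpr h)]
  simp [concatUpTo, hval, List.range_succ]

theorem concatUpTo_sub_one (s : ZMod m) (B : ZMod m → List (ZMod m)) :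
    concatUpTo s B (s - 1) = concatFrom m s B := by
  have hval : (s - 1 - s).val + 1 = m := by
    obtain ⟨n, rfl⟩ := Nat.exists_eq_succ_of_ne_zero (NeZero.ne m)
    rw [sub_sub_cancel_left, ZMod.val_neg_one]
  rw [concatUpTo, hval, concatFrom]

theorem concatUpTo_prefix_concatFrom (s : ZMod m) (B : ZMod m → List (ZMod m)) (x : ZMod m) :
    concatUpTo s B x <+: concatFrom m s B := by
  refine List.IsPrefix.flatMap ?_ _
  rw [List.prefix_iff_eq_take, List.take_range, List.length_range,
    min_eq_left (ZMod.val_lt (x - s))]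

theorem suffix_concatUpTo (s : ZMod m) (B : ZMod m → List (ZMod m)) (x : ZMod m) :
    B x <:+ concatUpTo s B x := by
  rcases eq_or_ne x s with rfl | hx
  · rw [concatUpTo_self]
  · exact concatUpTo_of_ne hx B ▸ List.suffix_append _ _

theorem concatUpTo_injective (s : ZMod m) : Function.Injective (concatUpTo s) := by
  intro B B' h
  funext x
  rcases eq_or_ne x s with rfl | hx
  · simpa only [concatUpTo_self] using congrFun h x
  · have hx' := congrFun h x
    rwa [concatUpTo_of_ne hx, concatUpTo_of_ne hx, h, List.append_cancel_left_eq] at hx'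

theorem concatUpTo_append_perm (s : ZMod m) (B : ZMod m → List (ZMod m)) (x : ZMod m) :
    (concatUpTo s B x ++ if x = s then concatFrom m s B else []).Perm
      (concatUpTo s B (x - 1) ++ B x) := by
  split_ifs with h
  · subst h
    rw [concatUpTo_self, concatUpTo_sub_one]
    exact List.perm_append_comm
  · rw [List.append_nil, concatUpTo_of_ne h]

theorem sum_count_eq_count_concatFrom (s : ZMod m) (B : ZMod m → List (ZMod m)) (z : ZMod m) :
    ∑ x, (B x).count z = (concatFrom m s B).count z := by
  have hcount (x : ZMod m) := (concatUpTo_append_perm s B x).count_eq z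
  have hsum := Finset.sum_congr rfl fun x (_ : x ∈ Finset.univ) => hcount x
  simp only [List.count_append, Finset.sum_add_distrib] at hsum
  have hshift : ∑ x, (concatUpTo s B (x - 1)).count z = ∑ x, (concatUpTo s B x).count z :=
    (Equiv.subRight 1).sum_comp fun x => (concatUpTo s B x).count z
  have hwrap : ∑ x, (if x = s then concatFrom m s B else []).count z =
      (concatFrom m s B).count z := by
    rw [Finset.sum_eq_single s] <;> simp +contextual
  omega

theorem exists_ne_nil_of_length_concatUpTo_lt (s : ZMod m) {B B' : ZMod m → List (ZMod m)}
    {x : ZMod m} (h : (concatUpTo s B x).length < (concatUpTo s B' x).length) :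
    ∃ y, (concatUpTo s B y).length < (concatUpTo s B' y).length ∧ B' y ≠ [] := by
  induction x using zmod_cyclic_induction s with
  | start =>
    refine ⟨s, h, List.ne_nil_of_length_pos ?_⟩
    rw [concatUpTo_self s B'] at h
    exact Nat.zero_lt_of_lt h
  | step x hx ih =>
    by_cases hnil : B' x = []
    · apply ih
      rw [concatUpTo_of_ne hx, concatUpTo_of_ne hx, hnil, List.append_nil,
        List.length_append] at h
      exact lt_of_le_of_lt (Nat.le_add_right _ _) h
    · exact ⟨x, h, hnil⟩

end ConcatUpTo

section Excess

variable {m : ℕ} [NeZero m]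

/-- The excess of arrivals over departures, a letter `z` of the block `y` being a departure from `y`
and an arrival at `y + z`, accumulated cyclically up to the vertex `x`. Departures are accumulated
from `s`, but arrivals by the letter `z` from `s + z`, that is, over the blocks `s, …, x - z`: the
sum over all `x` then vanishes. -/
def cumulativeExcess (s : ZMod m) (B : ZMod m → List (ZMod m)) (x : ZMod m) : ℤ :=
  ∑ z, ((concatUpTo s B (x - z)).count z : ℤ) - (concatUpTo s B x).length

theorem cumulativeExcess_sub_pred (s : ZMod m) (B : ZMod m → List (ZMod m)) (x : ZMod m) :
    cumulativeExcess s B x - cumulativeExcess s B (x - 1) =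
      (∑ z, ((B (x - z)).count z : ℤ) - (B x).length) +
        ((if x = s then ((concatFrom m s B).length : ℤ) else 0) -
          (concatFrom m s B).count (x - s)) := by
  have hlength := (concatUpTo_append_perm s B x).length_eq
  have hcount (z : ZMod m) := (concatUpTo_append_perm s B (x - z)).count_eq z
  have hwrap : ∑ z, (if x - z = s then concatFrom m s B else []).count z =
      (concatFrom m s B).count (x - s) := by
    rw [Finset.sum_eq_single (x - s)]
    · simp
    · intro z _ hz
      rw [if_neg fun h => hz (by rw [← h, sub_sub_cancel]), List.count_nil]
    · simp
  have hsum := Finset.sum_congr rfl fun z (_ : z ∈ Finset.univ) => hcount z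
  simp only [List.count_append, Finset.sum_add_distrib, hwrap, sub_right_comm x _ 1] at hsum
  rw [List.length_append, List.length_append, apply_ite List.length, List.length_nil] at hlength
  zify at hlength hsum
  simp only [cumulativeExcess]
  linarith

theorem sum_cumulativeExcess (s : ZMod m) (B : ZMod m → List (ZMod m)) :
    ∑ x, cumulativeExcess s B x = 0 := by
  have hshift (z : ZMod m) : ∑ x, ((concatUpTo s B (x - z)).count z : ℤ) =
      ∑ x, ((concatUpTo s B x).count z : ℤ) :=
    (Equiv.subRight z).sum_comp fun x => ((concatUpTo s B x).count z : ℤ)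
  simp only [cumulativeExcess, Finset.sum_sub_distrib]
  rw [Finset.sum_comm, Finset.sum_congr rfl fun z _ => hshift z, Finset.sum_comm, sub_eq_zero]
  exact_mod_cast Finset.sum_congr rfl fun x _ => sum_count_eq_length (concatUpTo s B x)

theorem cumulativeExcess_exits_eq {s t : ZMod m} {u u' : List (ZMod m)} (hsum : u.sum = u'.sum)
    (hconcat : concatFrom m s (exits t u) = concatFrom m s (exits t u')) (x : ZMod m) :
    cumulativeExcess s (exits t u) x = cumulativeExcess s (exits t u') x := by
  refine eq_of_sub_pred_eq_of_sum_eq (fun x => ?_) ?_ x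
  · have hbalance := length_exits_add t u x
    have hbalance' := length_exits_add t u' x
    rw [cumulativeExcess_sub_pred, cumulativeExcess_sub_pred, hconcat]
    rw [← hsum] at hbalance'
    zify at hbalance hbalance'
    linarith
  · rw [sum_cumulativeExcess, sum_cumulativeExcess]

theorem length_concatUpTo_lt_of_count_lt {s : ZMod m} {B B' : ZMod m → List (ZMod m)}
    (hconcat : concatFrom m s B = concatFrom m s B')
    (hexcess : ∀ x, cumulativeExcess s B x = cumulativeExcess s B' x) {x z : ZMod m}
    (h : (concatUpTo s B x).count z < (concatUpTo s B' x).count z) :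
    (concatUpTo s B (x + z)).length < (concatUpTo s B' (x + z)).length := by
  let f (z x : ZMod m) : ℤ := (concatUpTo s B' x).count z - (concatUpTo s B x).count z
  have hcolumn (x : ZMod m) :
      ∑ z, f z x = (concatUpTo s B' x).length - (concatUpTo s B x).length := by
    simp only [f, Finset.sum_sub_distrib, ← Nat.cast_sum, sum_count_eq_length]
  have hsign (x : ZMod m) : (∀ z, 0 ≤ f z x) ∨ ∀ z, f z x ≤ 0 := by
    have hB := concatUpTo_prefix_concatFrom s B x
    have hB' := hconcat ▸ concatUpTo_prefix_concatFrom s B' x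
    rcases le_total (concatUpTo s B x).length (concatUpTo s B' x).length with hle | hle
    · exact Or.inl fun z => sub_nonneg.mpr <| mod_cast
        (List.prefix_of_prefix_length_le hB hB' hle).sublist.count_le z
    · exact Or.inr fun z => sub_nonpos.mpr <| mod_cast
        (List.prefix_of_prefix_length_le hB' hB hle).sublist.count_le z
  have hperm (x : ZMod m) : ∑ z, f z ((Equiv.addRight z).symm x) = ∑ z, f z x := by
    have hx := hexcess x
    simp only [cumulativeExcess] at hx
    simp only [hcolumn, f, Equiv.addRight_symm, Equiv.coe_addRight, ← sub_eq_add_neg,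
      Finset.sum_sub_distrib]
    linarith
  have hpos : 0 < f z x := sub_pos.mpr (mod_cast h)
  have hsum := sum_pos_of_sum_perm_eq hsign hperm hpos
  rw [hcolumn, sub_pos] at hsum
  exact_mod_cast hsum

end Excess

section Sweep

variable {m : ℕ}

/-- The sweep map: the steps of the walk from `t` with steps `u`, rearranged by the vertices they
leave, in cyclic order from the vertex following the end of the walk. -/
def sweep (t : ZMod m) (u : List (ZMod m)) : List (ZMod m) :=
  concatFrom m (t + u.sum + 1) (exits t u)

variable [NeZero m]

theorem sweep_perm (t : ZMod m) (u : List (ZMod m)) : (sweep t u).Perm u :=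
  List.perm_iff_count.mpr fun z => by
    rw [sweep, ← sum_count_eq_count_concatFrom, sum_count_exits]

theorem sum_eq_of_sweep_eq {t : ZMod m} {u u' : List (ZMod m)} (h : sweep t u = sweep t u') :
    u.sum = u'.sum := by
  rw [← (sweep_perm t u).sum_eq, h, (sweep_perm t u').sum_eq]

theorem length_concatUpTo_exits_le {t : ZMod m} {u u' : List (ZMod m)} (h : sweep t u = sweep t u')
    (x : ZMod m) :
    (concatUpTo (t + u'.sum + 1) (exits t u') x).length ≤
      (concatUpTo (t + u'.sum + 1) (exits t u) x).length := by
  have hsum : u.sum = u'.sum := sum_eq_of_sweep_eq h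
  rw [sweep, sweep, hsum] at h
  set s := t + u'.sum + 1 with hs
  by_contra! hlt
  let J : Set (ZMod m) :=
    {y | (concatUpTo s (exits t u) y).length < (concatUpTo s (exits t u') y).length}
  have hclosed : ∀ y ∈ J, ∀ v ∈ (exits t u' y).getLast?, y + v ∈ J := by
    intro y hy v hv
    have hinitial : concatUpTo s (exits t u) y <+: concatUpTo s (exits t u') y :=
      List.prefix_of_prefix_length_le (concatUpTo_prefix_concatFrom s _ y)
        (h ▸ concatUpTo_prefix_concatFrom s _ y) (le_of_lt hy)
    have hlast : v ∈ (concatUpTo s (exits t u') y).getLast? := by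
      obtain ⟨P, hP⟩ := suffix_concatUpTo s (exits t u') y
      rw [← hP, List.getLast?_append, hv, Option.some_or]
      rfl
    exact length_concatUpTo_lt_of_count_lt h (cumulativeExcess_exits_eq hsum h)
      (count_lt_count_of_prefix_of_mem_getLast? hinitial hy hlast)
  have hend : t + u'.sum ∈ J :=
    add_sum_mem_of_getLast?_exits hclosed (Or.inr (exists_ne_nil_of_length_concatUpTo_lt s hlt))
  have hlast : t + u'.sum = s - 1 := by rw [hs, add_sub_cancel_right]
  rw [hlast, Set.mem_ofPred_eq, concatUpTo_sub_one, concatUpTo_sub_one, h] at hend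
  exact lt_irrefl _ hend

theorem sweep_injective (t : ZMod m) : Function.Injective (sweep t) := by
  intro u u' h
  have hsum : u.sum = u'.sum := sum_eq_of_sweep_eq h
  have hconcat := h
  rw [sweep, sweep, hsum] at hconcat
  refine exits_injective t (concatUpTo_injective (t + u'.sum + 1) (funext fun x => ?_))
  have hlength : (concatUpTo (t + u'.sum + 1) (exits t u) x).length =
      (concatUpTo (t + u'.sum + 1) (exits t u') x).length :=
    le_antisymm (hsum ▸ length_concatUpTo_exits_le h.symm x) (length_concatUpTo_exits_le h x)
  have hinitial := concatUpTo_prefix_concatFrom (t + u'.sum + 1) (exits t u) x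
  exact (List.prefix_of_prefix_length_le hinitial
    (hconcat ▸ concatUpTo_prefix_concatFrom _ _ x) hlength.le).eq_of_length hlength

theorem sweep_surjective (t : ZMod m) : Function.Surjective (sweep t) := by
  intro w
  have hmaps : Set.MapsTo (sweep t) {u | u.length = w.length} {u | u.length = w.length} :=
    fun u hu => (sweep_perm t u).length_eq.trans hu
  have hbij := ((List.finite_length_eq (ZMod m) w.length).injOn_iff_bijOn_of_mapsTo hmaps).mp
    (sweep_injective t).injOn
  obtain ⟨u, -, hu⟩ := hbij.surjOn (rfl : w.length = w.length)
  exact ⟨u, hu⟩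

end Sweep

/-- Every word of length `k+1` over `ℤ/mℤ` admits a successful partition: a splitting
into `m` consecutive blocks labeled cyclically starting with `σ+1` (where `σ` is the
sum of the word), on which the recovery algorithm removes all letters, never reading
from an empty block. -/
theorem successful_partition_exists (m k : ℕ) (hm : 1 ≤ m)
    (w : Fin (k + 1) → ZMod m) :
    ∃ B : ZMod m → List (ZMod m),
      concatFrom m ((∑ i, w i) + 1) B = List.ofFn w ∧
      ∃ out, recover m (k + 1) 0 B = some (out, fun _ => []) := by
  have : NeZero m := ⟨by omega⟩
  obtain ⟨u, hu⟩ := sweep_surjective (0 : ZMod m) (List.ofFn w)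
  have hperm : (List.ofFn w).Perm u := hu ▸ sweep_perm 0 u
  have hsum : u.sum = ∑ i, w i := by rw [← hperm.sum_eq, List.sum_ofFn]
  have hlength : u.length = k + 1 := by rw [← hperm.length_eq, List.length_ofFn]
  refine ⟨exits 0 u, ?_, _, hlength ▸ recover_exits 0 u⟩
  rw [← hu, sweep, zero_add, hsum]
end

section
/- The composite map f ∘ p, where p sends a word x of length k+1 over Z/mZ (with x_0 = 0) to the partitioned word placing x_i - x_{i-1} into block x_{i-1}, and f forgets the partition (concatenating blocks in consecutive label order starting from label σ+1, σ = x_{k+1}), is a bijection from the set of words of length k+1 over Z/mZ to itself. -/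
def Xseq (m k : ℕ) (x : Fin (k + 1) → ZMod m) : ℕ → ZMod m :=
  fun i => if h : 1 ≤ i ∧ i ≤ k + 1 then x ⟨i - 1, by omega⟩ else 0

/-- The map `p`: the letter `tᵢ = xᵢ - x_{i-1}` is appended to block `x_{i-1}`
(with `x₀ = 0`), in increasing order of `i`. -/
def pMap (m k : ℕ) (x : Fin (k + 1) → ZMod m) : ZMod m → List (ZMod m) :=
  fun b => ((List.range (k + 1)).filter (fun i => decide (Xseq m k x i = b))).map
    (fun i => Xseq m k x (i + 1) - Xseq m k x i)

/-- The forgetful map `f` applied to `p x`: read the blocks of `p x` in cyclic label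
order `σ+1, σ+2, …, σ`, where `σ = x_{k+1}` is the last letter of `x`. -/
def fpMap (m k : ℕ) (x : Fin (k + 1) → ZMod m) : List (ZMod m) :=
  concatFrom m (x (Fin.last k) + 1) (pMap m k x)

/-!
Seen from the label at which the reading starts, the word `x` is a walk on `ℤ/mℤ` ending at `-1`,
and `f ∘ p` lists its steps after a stable sort by the label they leave from. There are finitely
many words, so injectivity is enough, and the sorted steps together with their labels determine the
walk.

Let the walks `X` and `Y` have the same sorted steps, and suppose that at some position the label
for `Y` is smaller than the label for `X`. Let `T` be the union of the intervals `[v, u)` over all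
positions whose label is `u` for `X` and `v` for `Y`. Regard a step `a` from `b` as the arc
`b, b + 1, …, b + (a - 1)`. The arcs of a walk follow one another, so the total number of visits of
the arcs to `T` depends only on the starting point and the steps, and is the same for `X` and `Y`.
As both label sequences are sorted, the arc at each position visits `T` for `Y` at least as often as
for `X`; hence equality holds everywhere, and this forces every step whose label drops from `u` to
`v < u` to lead from `v` into `T`. Now `Y` visits `T` but ends outside it. Its last step out of `T`
leaves from some `b ∈ [v, u)`; being the last step from `b`, it is sorted no earlier than the
position that contributes `[v, u)`, so its label for `X` is at least `u > b`. It therefore leads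
into `T` after all.
-/

section StableSort

variable {n : ℕ} {α : Type*} [LinearOrder α]

theorem flatMap_filter_finRange_eq_ofFn_sort (f : Fin n → α) {l : List α}
    (hl : l.Pairwise (· < ·)) (hf : ∀ i, f i ∈ l) :
    l.flatMap (fun a => (List.finRange n).filter (f · = a)) = List.ofFn (Tuple.sort f) := by
  obtain ⟨hmono, hstable⟩ := Tuple.eq_sort_iff.mp (rfl : Tuple.sort f = Tuple.sort f)
  let before (i j : Fin n) : Prop := f i < f j ∨ f i = f j ∧ i < j
  have hleft : (l.flatMap fun a => (List.finRange n).filter (f · = a)).Pairwise before := by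
    refine List.pairwise_flatMap.mpr ⟨fun a _ => ?_, hl.imp fun hab i hi j hj => ?_⟩
    · refine List.pairwise_filter.mpr ((List.pairwise_lt_finRange n).imp fun hij hi hj => ?_)
      simp only [decide_eq_true_eq] at hi hj
      exact Or.inr ⟨hi.trans hj.symm, hij⟩
    · simp only [List.mem_filter, decide_eq_true_eq] at hi hj
      exact Or.inl (hi.2 ▸ hj.2 ▸ hab)
  have hright : (List.ofFn (Tuple.sort f)).Pairwise before :=
    List.pairwise_ofFn.mpr fun i j hij =>
      (hmono hij.le).lt_or_eq.imp_right fun h => ⟨h, hstable i j hij h⟩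
  have hirrefl {i j : Fin n} (h : before i j) : i ≠ j := by
    rintro rfl
    exact h.elim (lt_irrefl _) fun h => lt_irrefl _ h.2
  refine List.Perm.eq_of_pairwise (fun i j _ _ hij hji => ?_) hleft hright ?_
  · rcases hij with hij | ⟨h, hij⟩ <;> rcases hji with hji | ⟨h', hji⟩ <;> order
  · refine (List.perm_ext_iff_of_nodup (hleft.imp hirrefl) (hright.imp hirrefl)).mpr fun i => ?_
    simp [List.mem_ofFn, hf, (Tuple.sort f).surjective i]

end StableSort

section Arcs

variable {m : ℕ}

open Classical in
/-- The number of visits to `T` of the arc `b, b + 1, …, b + (a - 1)`, which may wind around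
`ℤ/mℤ` several times. -/
noncomputable def arcCount (T : Set (ZMod m)) (b : ZMod m) (a : ℕ) : ℕ :=
  Nat.count (fun r : ℕ => b + r ∈ T) a

variable {T : Set (ZMod m)} {b : ZMod m} {d : ℕ}

theorem arcCount_eq_self_iff : arcCount T b d = d ↔ ∀ r < d, b + (r : ZMod m) ∈ T := by
  classical exact Nat.count_iff_forall

theorem arcCount_eq_zero_iff : arcCount T b d = 0 ↔ ∀ r < d, b + (r : ZMod m) ∉ T := by
  classical exact Nat.count_iff_forall_not

theorem arcCount_le : arcCount T b d ≤ d := by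
  classical exact Nat.count_le _

theorem arcCount_add (T : Set (ZMod m)) (b : ZMod m) (a d : ℕ) :
    arcCount T b (a + d) = arcCount T b a + arcCount T (b + a) d := by
  rw [arcCount, arcCount, arcCount, Nat.count_add]
  congr! 3 with r
  rw [Nat.cast_add, add_assoc]

theorem arcCount_add_arcCount_comm (T : Set (ZMod m)) (b : ZMod m) (a d : ℕ) :
    arcCount T b d + arcCount T (b + d) a = arcCount T b a + arcCount T (b + a) d := by
  rw [← arcCount_add, ← arcCount_add, add_comm]

theorem arcCount_add_le_of_forall_mem (h : ∀ r < d, b + (r : ZMod m) ∈ T) (a : ℕ) :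
    arcCount T (b + d) a ≤ arcCount T b a := by
  have hcomm := arcCount_add_arcCount_comm T b a d
  rw [arcCount_eq_self_iff.mpr h] at hcomm
  have : arcCount T (b + a) d ≤ d := arcCount_le
  omega

theorem arcCount_le_add_of_forall_notMem (h : ∀ r < d, b + (r : ZMod m) ∉ T) (a : ℕ) :
    arcCount T b a ≤ arcCount T (b + d) a := by
  have hcomm := arcCount_add_arcCount_comm T b a d
  rw [arcCount_eq_zero_iff.mpr h] at hcomm
  omega

theorem forall_add_mem_of_arcCount_eq (h : ∀ r < d, b + (r : ZMod m) ∈ T) {a : ℕ}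
    (heq : arcCount T (b + d) a = arcCount T b a) : ∀ r < d, b + a + (r : ZMod m) ∈ T := by
  have hcomm := arcCount_add_arcCount_comm T b a d
  rw [arcCount_eq_self_iff.mpr h, heq] at hcomm
  exact arcCount_eq_self_iff.mp (by omega)

theorem sum_arcCount_walk [NeZero m] (T : Set (ZMod m)) (X : ℕ → ZMod m) (N : ℕ) :
    ∑ i ∈ Finset.range N, arcCount T (X i) (X (i + 1) - X i).val =
      arcCount T (X 0) (∑ i ∈ Finset.range N, (X (i + 1) - X i).val) := by
  induction N with
  | zero => simp [arcCount]
  | succ N ih =>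
    have hXN : X 0 + ((∑ i ∈ Finset.range N, (X (i + 1) - X i).val : ℕ) : ZMod m) = X N := by
      simp only [Nat.cast_sum, ZMod.natCast_zmod_val, Finset.sum_range_sub, add_sub_cancel]
    rw [Finset.sum_range_succ, Finset.sum_range_succ, arcCount_add, ih, hXN]

end Arcs

section LabelGap

variable {m : ℕ} {ι : Type*}

/-- The union of the intervals `[V j, U j)`, for the order on `ℤ/mℤ` by representatives
`0, …, m - 1`. -/
def labelGap (U V : ι → ZMod m) : Set (ZMod m) :=
  {b | ∃ j, (V j).val ≤ b.val ∧ b.val < (U j).val}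

variable {U V : ι → ZMod m}

theorem notMem_labelGap_of_mem_swap [LinearOrder ι] (hU : Monotone fun j => (U j).val)
    (hV : Monotone fun j => (V j).val) {b : ZMod m} (hb : b ∈ labelGap V U) :
    b ∉ labelGap U V := by
  rintro ⟨j, hVj, hUj⟩
  obtain ⟨i, hUi, hVi⟩ := hb
  have hij : i < j := hU.reflect_lt (hUi.trans_lt hUj)
  exact (hV hij.le).not_gt (hVj.trans_lt hVi)

variable [NeZero m]

theorem neg_one_notMem_labelGap : (-1 : ZMod m) ∉ labelGap U V := by
  rintro ⟨j, -, hj⟩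
  obtain ⟨n, rfl⟩ := Nat.exists_eq_succ_of_ne_zero (NeZero.ne m)
  have := ZMod.val_lt (U j)
  rw [ZMod.val_neg_one] at hj
  omega

theorem exists_eq_add_natCast_of_val_le {j : ι} (h : (V j).val ≤ (U j).val) :
    ∃ d : ℕ, U j = V j + d ∧ ∀ r < d, V j + (r : ZMod m) ∈ labelGap U V := by
  refine ⟨(U j).val - (V j).val, ?_, fun r hr => ⟨j, ?_⟩⟩
  · rw [Nat.cast_sub h, ZMod.natCast_zmod_val, ZMod.natCast_zmod_val, add_sub_cancel]
  · have hlt : (V j).val + r < (U j).val := by omega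
    have hval : (V j + (r : ZMod m)).val = (V j).val + r := by
      rw [← ZMod.val_natCast_of_lt (hlt.trans (ZMod.val_lt _)), Nat.cast_add,
        ZMod.natCast_zmod_val]
    omega

theorem arcCount_labelGap_le [LinearOrder ι] (hU : Monotone fun j => (U j).val)
    (hV : Monotone fun j => (V j).val) (j : ι) (a : ℕ) :
    arcCount (labelGap U V) (U j) a ≤ arcCount (labelGap U V) (V j) a := by
  rcases le_total (V j).val (U j).val with h | h
  · obtain ⟨d, hd, hmem⟩ := exists_eq_add_natCast_of_val_le h
    rw [hd]
    exact arcCount_add_le_of_forall_mem hmem a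
  · obtain ⟨d, hd, hmem⟩ := exists_eq_add_natCast_of_val_le h
    rw [hd]
    exact arcCount_le_add_of_forall_notMem
      (fun r hr => notMem_labelGap_of_mem_swap hU hV (hmem r hr)) a

theorem add_mem_labelGap_of_arcCount_eq {j : ι} (hj : (V j).val < (U j).val) {a : ℕ}
    (h : arcCount (labelGap U V) (U j) a = arcCount (labelGap U V) (V j) a) :
    V j + a ∈ labelGap U V := by
  obtain ⟨d, hd, hmem⟩ := exists_eq_add_natCast_of_val_le hj.le
  have hpos : 0 < d := by
    rw [Nat.pos_iff_ne_zero]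
    rintro rfl
    simp [hd] at hj
  rw [hd] at h
  simpa using forall_add_mem_of_arcCount_eq hmem h 0 hpos

end LabelGap

theorem exists_last_of_not {P : ℕ → Prop} {i N : ℕ} (hi : i < N) (hP : P i) (hN : ¬P N) :
    ∃ l < N, P l ∧ ∀ j, l < j → j ≤ N → ¬P j := by
  classical
  have hl : P (Nat.findGreatest P N) := Nat.findGreatest_spec hi.le hP
  exact ⟨_, (Nat.findGreatest_le N).lt_of_ne fun h => hN (h ▸ hl), hl,
    fun j => Nat.findGreatest_is_greatest⟩

section SortedSteps

variable {m N : ℕ}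

/-- The times `0, …, N - 1` of the walk `X`, sorted by the label of `X`; times with equal labels
keep their order. -/
def stepOrder (N : ℕ) (X : ℕ → ZMod m) : Equiv.Perm (Fin N) :=
  Tuple.sort fun i : Fin N => (X i).val

/-- The labels from which the sorted steps of the walk `X` leave. -/
def sortedLabels (N : ℕ) (X : ℕ → ZMod m) (j : Fin N) : ZMod m :=
  X (stepOrder N X j)

/-- The steps of the walk `X` in the order `stepOrder`. -/
def sortedSteps (N : ℕ) (X : ℕ → ZMod m) (j : Fin N) : ZMod m :=
  X (stepOrder N X j + 1) - X (stepOrder N X j)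

theorem monotone_val_sortedLabels (X : ℕ → ZMod m) :
    Monotone fun j => (sortedLabels N X j).val :=
  Tuple.monotone_sort fun i : Fin N => (X i).val

theorem stepOrder_lt_stepOrder {X : ℕ → ZMod m} {i j : Fin N} (hij : i < j)
    (h : sortedLabels N X i = sortedLabels N X j) : stepOrder N X i < stepOrder N X j :=
  (Tuple.eq_sort_iff.mp rfl).2 i j hij (congrArg ZMod.val h)

theorem sortedLabels_symm_stepOrder (X : ℕ → ZMod m) (i : Fin N) :
    sortedLabels N X ((stepOrder N X).symm i) = X i := by
  rw [sortedLabels, Equiv.apply_symm_apply]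

theorem symm_stepOrder_le {X Y : ℕ → ZMod m} (hlabels : sortedLabels N X = sortedLabels N Y)
    {i : Fin N} (hi : X i = Y i)
    (hpos : ∀ l < i, (stepOrder N X).symm l = (stepOrder N Y).symm l) :
    (stepOrder N Y).symm i ≤ (stepOrder N X).symm i := by
  set p := (stepOrder N X).symm i with hp
  by_contra! hpq
  have hlabel : sortedLabels N Y p = sortedLabels N Y ((stepOrder N Y).symm i) := by
    rw [sortedLabels_symm_stepOrder, ← hlabels, hp, sortedLabels_symm_stepOrder, hi]
  have hlt : stepOrder N Y p < i := by simpa using stepOrder_lt_stepOrder hpq hlabel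
  have hpX : (stepOrder N X).symm (stepOrder N Y p) = (stepOrder N X).symm i := by
    rw [hpos _ hlt, Equiv.symm_apply_apply]
  exact hlt.ne ((stepOrder N X).symm.injective hpX)

theorem add_sortedSteps_symm_stepOrder (X : ℕ → ZMod m) (i : Fin N) :
    X i + sortedSteps N X ((stepOrder N X).symm i) = X (i + 1) := by
  rw [sortedSteps, Equiv.apply_symm_apply, add_sub_cancel]

theorem eq_of_sortedLabels_eq_of_sortedSteps_eq {X Y : ℕ → ZMod m} (h0 : X 0 = Y 0)
    (hlabels : sortedLabels N X = sortedLabels N Y)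
    (hsteps : sortedSteps N X = sortedSteps N Y) {i : ℕ} (hi : i ≤ N) : X i = Y i := by
  suffices X i = Y i ∧
      ∀ l : Fin N, (l : ℕ) < i → (stepOrder N X).symm l = (stepOrder N Y).symm l from this.1
  induction i with
  | zero => exact ⟨h0, fun l hl => absurd hl l.val.not_lt_zero⟩
  | succ i ih =>
    obtain ⟨heq, hpos⟩ := ih (by omega)
    let t : Fin N := ⟨i, hi⟩
    have ht : (stepOrder N X).symm t = (stepOrder N Y).symm t :=
      le_antisymm (symm_stepOrder_le hlabels.symm heq.symm fun l hl => (hpos l hl).symm)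
        (symm_stepOrder_le hlabels heq hpos)
    refine ⟨?_, fun l hl => ?_⟩
    · calc X (i + 1) = X t + sortedSteps N X ((stepOrder N X).symm t) :=
            (add_sortedSteps_symm_stepOrder X t).symm
        _ = Y t + sortedSteps N Y ((stepOrder N Y).symm t) := by rw [ht, hsteps, heq]
        _ = Y (i + 1) := add_sortedSteps_symm_stepOrder Y t
    · rcases Nat.lt_succ_iff_lt_or_eq.mp hl with hl | hl
      · exact hpos l hl
      · rwa [show l = t from Fin.ext hl]

theorem sum_sortedSteps {A : Type*} [AddCommMonoid A] (X : ℕ → ZMod m)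
    (F : ZMod m → ZMod m → A) :
    ∑ j, F (sortedLabels N X j) (sortedSteps N X j) =
      ∑ i ∈ Finset.range N, F (X i) (X (i + 1) - X i) := by
  rw [← Fin.sum_univ_eq_sum_range (fun i => F (X i) (X (i + 1) - X i))]
  exact Equiv.sum_comp (stepOrder N X) fun i : Fin N => F (X i) (X (i + 1) - X i)

theorem sum_sortedSteps_eq_sub (X : ℕ → ZMod m) : ∑ j, sortedSteps N X j = X N - X 0 :=
  (sum_sortedSteps X fun _ a => a).trans (Finset.sum_range_sub X N)

theorem sum_arcCount_sortedSteps [NeZero m] (T : Set (ZMod m)) (X : ℕ → ZMod m) :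
    ∑ j, arcCount T (sortedLabels N X j) (sortedSteps N X j).val =
      arcCount T (X 0) (∑ j, (sortedSteps N X j).val) := by
  rw [sum_sortedSteps X fun b a => arcCount T b a.val, sum_sortedSteps X fun _ a => a.val,
    sum_arcCount_walk]

variable [NeZero m] {X Y : ℕ → ZMod m}

theorem add_sortedSteps_mem_labelGap (h0 : X 0 = Y 0)
    (hsteps : sortedSteps N X = sortedSteps N Y) {j : Fin N}
    (hj : (sortedLabels N Y j).val < (sortedLabels N X j).val) :
    sortedLabels N Y j + sortedSteps N Y j ∈
      labelGap (sortedLabels N X) (sortedLabels N Y) := by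
  set T := labelGap (sortedLabels N X) (sortedLabels N Y)
  have hle (j : Fin N) := arcCount_labelGap_le (monotone_val_sortedLabels X)
    (monotone_val_sortedLabels Y) j (sortedSteps N Y j).val
  have hsum : ∑ j, arcCount T (sortedLabels N X j) (sortedSteps N Y j).val =
      ∑ j, arcCount T (sortedLabels N Y j) (sortedSteps N Y j).val := by
    rw [sum_arcCount_sortedSteps, ← hsteps, sum_arcCount_sortedSteps, h0]
  have heq := (Finset.sum_eq_sum_iff_of_le fun j _ => hle j).mp hsum j (Finset.mem_univ j)
  simpa only [ZMod.natCast_zmod_val] using add_mem_labelGap_of_arcCount_eq hj heq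

theorem val_sortedLabels_le (h0 : X 0 = Y 0) (hN : Y N = -1)
    (hsteps : sortedSteps N X = sortedSteps N Y) (j : Fin N) :
    (sortedLabels N X j).val ≤ (sortedLabels N Y j).val := by
  set T := labelGap (sortedLabels N X) (sortedLabels N Y)
  by_contra! hj
  obtain ⟨l, hlN, hlT, hlast⟩ : ∃ l < N, Y l ∈ T ∧ ∀ i, l < i → i ≤ N → Y i ∉ T :=
    exists_last_of_not (P := fun i => Y i ∈ T) (stepOrder N Y j).isLt ⟨j, le_rfl, hj⟩
      (hN ▸ neg_one_notMem_labelGap)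
  obtain ⟨p, hp⟩ := (stepOrder N Y).surjective ⟨l, hlN⟩
  have hpl : sortedLabels N Y p = Y l := by rw [sortedLabels, hp]
  obtain ⟨q, hYq, hXq⟩ := hlT
  have hqp : q ≤ p := by
    by_contra! hpq
    have hlabel : sortedLabels N Y p = sortedLabels N Y q :=
      ZMod.val_injective m (le_antisymm (monotone_val_sortedLabels Y hpq.le) (hpl ▸ hYq))
    have hlt : l < stepOrder N Y q := by
      simpa only [hp] using Fin.lt_def.mp (stepOrder_lt_stepOrder hpq hlabel)
    refine hlast _ hlt (stepOrder N Y q).isLt.le ⟨q, le_rfl, ?_⟩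
    rwa [← hpl, hlabel] at hXq
  have hdrop : (sortedLabels N Y p).val < (sortedLabels N X p).val :=
    hpl ▸ hXq.trans_le (monotone_val_sortedLabels X hqp)
  have hstep : sortedLabels N Y p + sortedSteps N Y p = Y (l + 1) := by
    rw [sortedLabels, sortedSteps, hp, add_sub_cancel]
  exact hlast (l + 1) l.lt_succ_self hlN (hstep ▸ add_sortedSteps_mem_labelGap h0 hsteps hdrop)


theorem sortedLabels_eq_of_sortedSteps_eq (h0 : X 0 = Y 0) (hX : X N = -1) (hY : Y N = -1)
    (hsteps : sortedSteps N X = sortedSteps N Y) : sortedLabels N X = sortedLabels N Y :=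
  funext fun j => ZMod.val_injective m <| le_antisymm (val_sortedLabels_le h0 hY hsteps j)
    (val_sortedLabels_le h0.symm hX hsteps.symm j)

end SortedSteps

section Words

variable {m k : ℕ}

/-- The walk `0, x 0, …, x k` seen from the label at which `fpMap` starts reading the blocks, so
that this label becomes `0` and the walk ends at `-1`. -/
def relativeWalk (x : Fin (k + 1) → ZMod m) (i : ℕ) : ZMod m :=
  Xseq m k x i - (x (Fin.last k) + 1)

theorem Xseq_zero (x : Fin (k + 1) → ZMod m) : Xseq m k x 0 = 0 := by
  simp [Xseq]

theorem Xseq_succ (x : Fin (k + 1) → ZMod m) (i : Fin (k + 1)) :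
    Xseq m k x (i + 1) = x i := by
  simp [Xseq, Nat.lt_succ_iff.mp i.isLt]

theorem relativeWalk_zero (x : Fin (k + 1) → ZMod m) :
    relativeWalk x 0 = -(x (Fin.last k) + 1) := by
  rw [relativeWalk, Xseq_zero, zero_sub]

theorem relativeWalk_last (x : Fin (k + 1) → ZMod m) : relativeWalk x (k + 1) = -1 := by
  have hlast : Xseq m k x (k + 1) = x (Fin.last k) := Xseq_succ x (Fin.last k)
  rw [relativeWalk, hlast, sub_add_cancel_left]

variable [NeZero m]

theorem fpMap_eq_ofFn_sortedSteps (x : Fin (k + 1) → ZMod m) :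
    fpMap m k x = List.ofFn (sortedSteps (k + 1) (relativeWalk x)) := by
  set X := relativeWalk x with hX
  have hblock {n : ℕ} (hn : n < m) (i : ℕ) :
      Xseq m k x i = x (Fin.last k) + 1 + n ↔ (X i).val = n := by
    rw [← sub_eq_iff_eq_add', ← ZMod.val_injective m |>.eq_iff, ZMod.val_natCast_of_lt hn]
    rfl
  have hsort := flatMap_filter_finRange_eq_ofFn_sort (fun i : Fin (k + 1) => (X i).val)
    List.pairwise_lt_range fun i => List.mem_range.mpr (ZMod.val_lt (X i))
  calc fpMap m k x
      = (List.range m).flatMap fun n =>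
          ((List.finRange (k + 1)).filter fun i : Fin (k + 1) => (X i).val = n).map
            fun i : Fin (k + 1) => X (i + 1) - X i := by
        refine List.flatMap_congr fun n hn => ?_
        rw [pMap, ← List.map_coe_finRange_eq_range, List.filter_map, List.map_map]
        simp only [Function.comp_def, hblock (List.mem_range.mp hn), hX, relativeWalk,
          sub_sub_sub_cancel_right]
    _ = (List.ofFn (stepOrder (k + 1) X)).map fun i : Fin (k + 1) => X (i + 1) - X i := by
        rw [stepOrder, ← hsort, List.map_flatMap]
    _ = List.ofFn (sortedSteps (k + 1) X) := List.map_ofFn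

theorem sortedSteps_relativeWalk_injective :
    Function.Injective fun x : Fin (k + 1) → ZMod m => sortedSteps (k + 1) (relativeWalk x) := by
  intro x y hsteps
  have hlast : x (Fin.last k) = y (Fin.last k) := by
    have hsum := congrArg (fun w : Fin (k + 1) → ZMod m => ∑ j, w j) hsteps
    simpa only [sum_sortedSteps_eq_sub, relativeWalk_last, relativeWalk_zero, sub_right_inj,
      neg_inj, add_left_inj] using hsum
  have h0 : relativeWalk x 0 = relativeWalk y 0 := by
    rw [relativeWalk_zero, relativeWalk_zero, hlast]
  have hlabels := sortedLabels_eq_of_sortedSteps_eq h0 (relativeWalk_last x) (relativeWalk_last y)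
    hsteps
  funext i
  have hi := eq_of_sortedLabels_eq_of_sortedSteps_eq h0 hlabels hsteps (Nat.succ_le_of_lt i.isLt)
  simpa only [relativeWalk, Nat.succ_eq_add_one, Xseq_succ, hlast, sub_left_inj] using hi

end Words

/-- `f ∘ p` is a bijection from words of length `k+1` over `ℤ/mℤ` to themselves. -/
theorem fp_bijective (m k : ℕ) (hm : 1 ≤ m) (w : List (ZMod m)) (hw : w.length = k + 1) :
    ∃! x : Fin (k + 1) → ZMod m, fpMap m k x = w := by
  have : NeZero m := ⟨by omega⟩
  obtain ⟨v, rfl⟩ : ∃ v : Fin (k + 1) → ZMod m, List.ofFn v = w :=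
    ⟨fun i => w[i], by simp [← hw]⟩
  have hbij : Function.Bijective fun x : Fin (k + 1) → ZMod m =>
      sortedSteps (k + 1) (relativeWalk x) :=
    Finite.injective_iff_bijective.mp sortedSteps_relativeWalk_injective
  simpa only [fpMap_eq_ofFn_sortedSteps, List.ofFn_inj] using hbij.existsUnique v
end
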